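/- Let α ∈ (0,1) and suppose that both d₁ and d₂ are of type ν for some ν ≥ 0. Let s > 1/2 and let s₁ ∈ ℝ satisfy s₁ − s < min{1, s − ν}. Then there exists a constant C > 0 (depending on α, s, s₁, ν and the type constant K) such that for all sequences a, b : ℤ → ℂ with a₀ = 0, Σ_{k ∈ ℤ} ⟨k⟩^{2s₁} | Σ_{k₁ ∈ ℤ, k₁ ≠ 0} k · a_{k₁} b_{k − k₁} / (αk³ − k₁³ − α(k − k₁)³) |² ≤ C · (Σ_{m ∈ ℤ} ⟨m⟩^{2s} |a_m|²) · (Σ_{n ∈ ℤ} ⟨n⟩^{2s} |b_n|²). (For k₁ ≠ 0 the denominator αk³ − k₁³ − α(k − k₁)³ = −(1 − α)k₁(k₁ − d₁k)(k₁ − d₂k) never vanishes, since d₁ and d₂ are irrational.) -/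

import Mathlib

/-- The Japanese bracket `⟨x⟩ = (1 + x²)^{1/2}`. -/
noncomputable def jb (x : ℝ) : ℝ := Real.sqrt (1 + x^2)

/-- The larger root `c₁ = 1/2 + √(12/α − 3)/6` of `3αx² − 3αx + (α − 1)`. -/
noncomputable def c1 (α : ℝ) : ℝ := 1/2 + Real.sqrt (12/α - 3)/6

/-- The smaller root `c₂ = 1/2 − √(12/α − 3)/6` of `3αx² − 3αx + (α − 1)`. -/
noncomputable def c2 (α : ℝ) : ℝ := 1/2 - Real.sqrt (12/α - 3)/6

/-- `d₁ = 1/c₁`. -/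
noncomputable def d1 (α : ℝ) : ℝ := (c1 α)⁻¹

/-- `d₂ = 1/c₂`. -/
noncomputable def d2 (α : ℝ) : ℝ := (c2 α)⁻¹

/-- A real number `ρ` is of type `ν` if there is `K > 0` with
`|ρ − m/n| ≥ K/|n|^{2+ν}` for all integers `m` and all nonzero integers `n`. -/
def IsOfType (ρ ν : ℝ) : Prop :=
  ∃ K > 0, ∀ m n : ℤ, n ≠ 0 → K / |(n : ℝ)| ^ (2 + ν) ≤ |ρ - (m : ℝ) / (n : ℝ)|

/-- The `k₁`-summand of the bilinear form `B₂` (restricted to `k₁ ≠ 0`):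
`k·a_{k₁}·b_{k−k₁}/(αk³ − k₁³ − α(k−k₁)³)`. -/
noncomputable def B2term (α : ℝ) (a b : ℤ → ℂ) (k k₁ : ℤ) : ℂ :=
  if k₁ = 0 then 0
  else ((k : ℂ) * a k₁ * b (k - k₁)) /
    ((((α * (k : ℝ)^3 - (k₁ : ℝ)^3 - α * ((k : ℝ) - (k₁ : ℝ))^3 : ℝ)) : ℂ))

/-!
The denominator factors as `-(1 - α) k₁ (k₁ - d₁ k) (k₁ - d₂ k)`, so by partial fractions the symbol
of `B₂` is a linear combination of `(k₁ (k₁ - d k))⁻¹` for `d = d₁, d₂`. If `|k₁ - d k| ≳ ⟨k⟩`, this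
gains one derivative, which is the condition `s₁ - s ≤ 1`. Otherwise `|k₁|` and `|k - k₁|` are both
`≳ ⟨k⟩`, so `⟨k₁⟩ˢ ⟨k - k₁⟩ˢ` is worth `⟨k⟩²ˢ`, while the type condition bounds the small divisor by
`|k₁ - d k|⁻¹ ≲ ⟨k⟩^{1+ν} ⟨k₁ - d k⟩⁻¹`; this is the condition `s₁ - s ≤ s - ν`. What is left over
after the weights are absorbed is, for each `k`, summable in `k₁` uniformly in `k`, and
Cauchy–Schwarz in `k₁` concludes.
-/

section JapaneseBracket

theorem jb_sq (x : ℝ) : jb x ^ 2 = 1 + x ^ 2 := Real.sq_sqrt (by positivity)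

theorem one_le_jb (x : ℝ) : 1 ≤ jb x :=
  Real.one_le_sqrt.2 (by linarith [sq_nonneg x])

theorem jb_pos (x : ℝ) : 0 < jb x := one_pos.trans_le (one_le_jb x)

theorem jb_rpow_pos (x p : ℝ) : 0 < jb x ^ p := Real.rpow_pos_of_pos (jb_pos x) p

theorem jb_neg (x : ℝ) : jb (-x) = jb x := by simp [jb]

theorem abs_le_jb (x : ℝ) : |x| ≤ jb x :=
  Real.abs_le_sqrt (by linarith)

theorem jb_add_le (x y : ℝ) : jb (x + y) ≤ jb x + jb y := by
  have hxy : x * y ≤ jb x * jb y :=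
    calc x * y ≤ |x| * |y| := (le_abs_self _).trans_eq (abs_mul x y)
      _ ≤ jb x * jb y := mul_le_mul (abs_le_jb x) (abs_le_jb y) (abs_nonneg y) (jb_pos x).le
  refine le_of_sq_le_sq ?_ (add_pos (jb_pos x) (jb_pos y)).le
  linarith [jb_sq x, jb_sq y, jb_sq (x + y), add_sq (jb x) (jb y), add_sq x y]

theorem jb_add_rpow_le {p : ℝ} (hp : 0 ≤ p) (x y : ℝ) :
    jb (x + y) ^ p ≤ 2 ^ p * (jb x ^ p + jb y ^ p) := by
  wlog hxy : jb x ≤ jb y generalizing x y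
  · rw [add_comm x, add_comm (jb x ^ p)]
    exact this y x (le_of_not_ge hxy)
  calc jb (x + y) ^ p ≤ (2 * jb y) ^ p := by
        have := jb_pos (x + y)
        gcongr
        linarith [jb_add_le x y]
    _ = 2 ^ p * jb y ^ p := Real.mul_rpow zero_le_two (jb_pos y).le
    _ ≤ 2 ^ p * (jb x ^ p + jb y ^ p) := by
        gcongr
        exact le_add_of_nonneg_left (jb_rpow_pos x p).le

theorem jb_le_two_mul_abs {x : ℝ} (hx : 1 ≤ |x|) : jb x ≤ 2 * |x| := by
  refine le_of_sq_le_sq ?_ (by positivity)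
  nlinarith [jb_sq x, sq_abs x]

theorem summable_jb_rpow_neg {p : ℝ} (hp : 1 < p) : Summable fun n : ℤ => jb n ^ (-p) := by
  refine (Real.summable_abs_int_rpow hp).of_norm_bounded_eventually ?_
  filter_upwards [Filter.eventually_cofinite_ne (0 : ℤ)] with n hn
  rw [Real.norm_of_nonneg (jb_rpow_pos _ _).le]
  exact Real.rpow_le_rpow_of_nonpos (by positivity) (abs_le_jb _) (by linarith)

theorem jb_sub_floor_le (x θ : ℝ) : jb (x - ⌊θ⌋) ≤ 3 * jb (x - θ) := by
  have hfract : jb (Int.fract θ) ≤ 2 :=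
    Real.sqrt_le_iff.2
      ⟨zero_le_two, by nlinarith [Int.fract_nonneg θ, Int.fract_lt_one θ]⟩
  calc jb (x - ⌊θ⌋) = jb (x - θ + Int.fract θ) := by rw [Int.fract]; ring_nf
    _ ≤ jb (x - θ) + jb (Int.fract θ) := jb_add_le _ _
    _ ≤ 3 * jb (x - θ) := by linarith [one_le_jb (x - θ)]

theorem exists_tsum_jb_sub_rpow_neg_le {p : ℝ} (hp : 1 < p) :
    ∃ C > 0, ∀ θ : ℝ, Summable (fun n : ℤ => jb (n - θ) ^ (-p)) ∧
      ∑' n : ℤ, jb (n - θ) ^ (-p) ≤ C := by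
  have hpos : 0 < ∑' n : ℤ, jb n ^ (-p) :=
    (summable_jb_rpow_neg hp).tsum_pos (fun n => (jb_rpow_pos n _).le) 0 (jb_rpow_pos _ _)
  refine ⟨3 ^ p * ∑' n : ℤ, jb n ^ (-p), by positivity, fun θ => ?_⟩
  have hle (n : ℤ) : jb (n - θ) ^ (-p) ≤ 3 ^ p * jb ((n - ⌊θ⌋ : ℤ) : ℝ) ^ (-p) := by
    have h := Real.rpow_le_rpow_of_nonpos (jb_pos _) (jb_sub_floor_le n θ)
      (neg_nonpos.2 (zero_le_one.trans hp.le))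
    rw [Real.mul_rpow zero_le_three (jb_pos _).le, Real.rpow_neg zero_le_three,
      inv_mul_le_iff₀ (by positivity)] at h
    exact_mod_cast h
  have hsum : HasSum (fun n : ℤ => 3 ^ p * jb ((n - ⌊θ⌋ : ℤ) : ℝ) ^ (-p))
      (3 ^ p * ∑' n : ℤ, jb n ^ (-p)) :=
    ((Equiv.subRight ⌊θ⌋).hasSum_iff.2 (summable_jb_rpow_neg hp).hasSum).mul_left _
  have hsummable : Summable fun n : ℤ => jb (n - θ) ^ (-p) :=
    .of_nonneg_of_le (fun n => (jb_rpow_pos _ _).le) hle hsum.summable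
  exact ⟨hsummable, (hsummable.tsum_le_tsum hle hsum.summable).trans_eq hsum.tsum_eq⟩

end JapaneseBracket

section SchurTest

variable {ι G R E : Type*} [NormedAddCommGroup E] [CompleteSpace E]

theorem summable_and_norm_tsum_sq_le {f g : ι → ℝ} {t : ι → E} (hf : ∀ i, 0 ≤ f i)
    (hg : ∀ i, 0 ≤ g i) (hfs : Summable f) (hgs : Summable g)
    (ht : ∀ i, ‖t i‖ ^ 2 ≤ f i * g i) :
    Summable t ∧ ‖∑' i, t i‖ ^ 2 ≤ (∑' i, f i) * ∑' i, g i := by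
  have hfin (u : Finset ι) : ∑ i ∈ u, ‖t i‖ ≤ √(∑' i, f i) * √(∑' i, g i) :=
    calc ∑ i ∈ u, ‖t i‖ ≤ ∑ i ∈ u, √(f i) * √(g i) := by
          gcongr with i
          rw [← Real.sqrt_mul (hf i)]
          exact Real.le_sqrt_of_sq_le (ht i)
      _ ≤ √(∑ i ∈ u, f i) * √(∑ i ∈ u, g i) := Real.sum_sqrt_mul_sqrt_le u hf hg
      _ ≤ √(∑' i, f i) * √(∑' i, g i) := by
          gcongr
          · exact hfs.sum_le_tsum u fun i _ => hf i
          · exact hgs.sum_le_tsum u fun i _ => hg i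
  have hts : Summable fun i => ‖t i‖ := summable_of_sum_le (fun _ => norm_nonneg _) hfin
  refine ⟨hts.of_norm, ?_⟩
  calc ‖∑' i, t i‖ ^ 2 ≤ (√(∑' i, f i) * √(∑' i, g i)) ^ 2 := by
        gcongr
        exact (norm_tsum_le_tsum_norm hts).trans (hts.tsum_le_of_sum_le hfin)
    _ = (∑' i, f i) * ∑' i, g i := by
        rw [mul_pow, Real.sq_sqrt (tsum_nonneg hf), Real.sq_sqrt (tsum_nonneg hg)]

/-- The change of variables `(k, m) ↦ (m, k - m)`, which turns a sum of convolution type into a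
product of two sums. -/
def convolutionEquiv (G : Type*) [AddGroup G] : G × G ≃ G × G :=
  (Equiv.prodComm G G).trans (Equiv.prodShear (Equiv.refl G) Equiv.subRight)

theorem summable_convolution [AddGroup G] [NormedRing R] [CompleteSpace R] {A B : G → R}
    (hA : Summable fun m => ‖A m‖) (hB : Summable fun n => ‖B n‖) :
    Summable fun p : G × G => A p.2 * B (p.1 - p.2) :=
  (convolutionEquiv G).summable_iff.2 (summable_mul_of_summable_norm hA hB)

theorem tsum_convolution [AddGroup G] [NormedRing R] [CompleteSpace R] {A B : G → R}
    (hA : Summable fun m => ‖A m‖) (hB : Summable fun n => ‖B n‖) :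
    ∑' k, ∑' m, A m * B (k - m) = (∑' m, A m) * ∑' n, B n := by
  rw [← (summable_convolution hA hB).tsum_prod, tsum_mul_tsum_of_summable_norm hA hB]
  exact (convolutionEquiv G).tsum_eq fun p => A p.1 * B p.2

theorem summable_and_tsum_weighted_norm_sq_le [AddGroup G] {w A B : G → ℝ} {N : G → G → ℝ}
    {t : G → G → E} {C : ℝ} (hw : ∀ k, 0 < w k) (hA : ∀ m, 0 ≤ A m) (hB : ∀ n, 0 ≤ B n)
    (hAs : Summable A) (hBs : Summable B) (hN : ∀ k m, 0 ≤ N k m) (hNs : ∀ k, Summable (N k))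
    (hNC : ∀ k, ∑' m, N k m ≤ C)
    (ht : ∀ k m, w k * ‖t k m‖ ^ 2 ≤ N k m * (A m * B (k - m))) :
    (∀ k, Summable (t k)) ∧ Summable (fun k => w k * ‖∑' m, t k m‖ ^ 2) ∧
      ∑' k, w k * ‖∑' m, t k m‖ ^ 2 ≤ C * (∑' m, A m) * ∑' n, B n := by
  have hconv := summable_convolution hAs.norm hBs.norm
  have hAB (k m : G) : 0 ≤ A m * B (k - m) := mul_nonneg (hA _) (hB _)
  have hrow (k : G) : Summable (t k) ∧
      ‖∑' m, t k m‖ ^ 2 ≤ (w k)⁻¹ * (∑' m, N k m) * ∑' m, A m * B (k - m) := by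
    rw [← tsum_mul_left (f := N k)]
    refine summable_and_norm_tsum_sq_le (fun m => mul_nonneg (inv_pos.2 (hw k)).le (hN k m))
      (hAB k) ((hNs k).mul_left _) (hconv.prod_factor k) fun m => ?_
    rw [mul_assoc, le_inv_mul_iff₀ (hw k)]
    exact ht k m
  have hbound (k : G) : w k * ‖∑' m, t k m‖ ^ 2 ≤ C * ∑' m, A m * B (k - m) :=
    calc w k * ‖∑' m, t k m‖ ^ 2 ≤ (∑' m, N k m) * ∑' m, A m * B (k - m) := by
          rw [← le_inv_mul_iff₀ (hw k), ← mul_assoc]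
          exact (hrow k).2
      _ ≤ C * ∑' m, A m * B (k - m) :=
          mul_le_mul_of_nonneg_right (hNC k) (tsum_nonneg (hAB k))
  have hmajorant : Summable fun k => C * ∑' m, A m * B (k - m) := hconv.prod.mul_left C
  have hsummable : Summable fun k => w k * ‖∑' m, t k m‖ ^ 2 :=
    .of_nonneg_of_le (fun k => mul_nonneg (hw k).le (sq_nonneg _)) hbound hmajorant
  refine ⟨fun k => (hrow k).1, hsummable, (hsummable.tsum_le_tsum hbound hmajorant).trans_eq ?_⟩
  rw [tsum_mul_left, tsum_convolution hAs.norm hBs.norm, mul_assoc]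

end SchurTest

section SmallDivisors

variable {ρ ν : ℝ}

theorem IsOfType.irrational (h : IsOfType ρ ν) : Irrational ρ := by
  obtain ⟨K, hK, hle⟩ := h
  refine (irrational_iff_ne_rational ρ).2 fun m n hn heq => ?_
  have hpos : 0 < K / |(n : ℝ)| ^ (2 + ν) := by positivity
  exact (hpos.trans_le (hle m n hn)).ne' (by rw [heq, sub_self, abs_zero])

theorem IsOfType.exists_le_abs_sub_mul (h : IsOfType ρ ν) :
    ∃ K > 0, ∀ k m : ℤ, k ≠ 0 → K / |(k : ℝ)| ^ (1 + ν) ≤ |m - ρ * k| := by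
  obtain ⟨K, hK, hle⟩ := h
  refine ⟨K, hK, fun k m hk => ?_⟩
  have hk' : 0 < |(k : ℝ)| := by positivity
  calc K / |(k : ℝ)| ^ (1 + ν) = K / |(k : ℝ)| ^ (2 + ν) * |(k : ℝ)| := by
        rw [show 2 + ν = 1 + ν + 1 by ring, Real.rpow_add_one hk'.ne']
        field_simp
    _ ≤ |ρ - m / k| * |(k : ℝ)| := by gcongr; exact hle m k hk
    _ = |m - ρ * k| := by
        rw [← abs_mul, abs_sub_comm, sub_mul, div_mul_cancel₀ _ (abs_pos.1 hk')]

theorem IsOfType.exists_inv_sq_le (h : IsOfType ρ ν) (hν : -1 ≤ ν) :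
    ∃ C > 0, ∀ k m : ℤ, k ≠ 0 →
      ((m - ρ * k) ^ 2)⁻¹ ≤ C * jb k ^ (2 + 2 * ν) * jb (m - ρ * k) ^ (-2 : ℝ) := by
  obtain ⟨K, hK, hle⟩ := h.exists_le_abs_sub_mul
  refine ⟨1 + (K ^ 2)⁻¹, by positivity, fun k m hk => ?_⟩
  set x : ℝ := m - ρ * k
  have hJ := jb_pos (k : ℝ)
  have hx : K / jb k ^ (1 + ν) ≤ |x| :=
    le_trans (by gcongr; exacts [by linarith, abs_le_jb _]) (hle k m hk)
  have hx0 : 0 < |x| := lt_of_lt_of_le (by positivity) hx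
  have hinv : (x ^ 2)⁻¹ ≤ (K ^ 2)⁻¹ * jb k ^ (2 + 2 * ν) :=
    calc (x ^ 2)⁻¹ ≤ ((K / jb k ^ (1 + ν)) ^ 2)⁻¹ := by rw [← sq_abs x]; gcongr
      _ = (K ^ 2)⁻¹ * jb k ^ (2 + 2 * ν) := by
          rw [show 2 + 2 * ν = (1 + ν) * (2 : ℕ) by push_cast; ring, Real.rpow_mul_natCast hJ.le,
            div_pow, inv_div, div_eq_inv_mul]
  have hone : 1 ≤ jb (k : ℝ) ^ (2 + 2 * ν) := Real.one_le_rpow (one_le_jb _) (by linarith)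
  have hxjb : (x ^ 2)⁻¹ = (1 + (x ^ 2)⁻¹) * jb x ^ (-2 : ℝ) := by
    have := abs_pos.1 hx0
    rw [Real.rpow_neg (jb_pos x).le, Real.rpow_two, jb_sq]
    field_simp
    ring
  calc (x ^ 2)⁻¹ = (1 + (x ^ 2)⁻¹) * jb x ^ (-2 : ℝ) := hxjb
    _ ≤ ((1 + (K ^ 2)⁻¹) * jb k ^ (2 + 2 * ν)) * jb x ^ (-2 : ℝ) := by
        have := jb_rpow_pos x (-2)
        gcongr
        linarith

end SmallDivisors

section ResonanceKernel

/-- The kernel that remains from `(k₁ (k₁ - ρ k))⁻²` once the weights `⟨k⟩^{2s₁}`, `⟨k₁⟩^{2s}` and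
`⟨k - k₁⟩^{2s}` have been accounted for; the index `m` stands for `k₁`. The first two terms come
from the frequencies away from the resonance `k₁ = ρ k`, the last one from those near it. -/
noncomputable def resonanceKernel (ρ s : ℝ) (k m : ℤ) : ℝ :=
  jb m ^ (-(2 * s)) + jb (k - m) ^ (-(2 * s)) + jb (m - ρ * k) ^ (-2 : ℝ)

theorem resonanceKernel_pos (ρ s : ℝ) (k m : ℤ) : 0 < resonanceKernel ρ s k m :=
  add_pos (add_pos (jb_rpow_pos _ _) (jb_rpow_pos _ _)) (jb_rpow_pos _ _)

theorem exists_tsum_resonanceKernel_le (ρ : ℝ) {s : ℝ} (hs : 1 / 2 < s) :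
    ∃ C > 0, ∀ k, Summable (resonanceKernel ρ s k) ∧ ∑' m, resonanceKernel ρ s k m ≤ C := by
  obtain ⟨C, hC₀, hC⟩ := exists_tsum_jb_sub_rpow_neg_le (p := 2 * s) (by linarith)
  obtain ⟨D, hD₀, hD⟩ := exists_tsum_jb_sub_rpow_neg_le (p := 2) one_lt_two
  refine ⟨C + C + D, by positivity, fun k => ?_⟩
  have heq : resonanceKernel ρ s k = fun m : ℤ =>
      jb (m - 0) ^ (-(2 * s)) + jb (m - k) ^ (-(2 * s)) + jb (m - ρ * k) ^ (-2 : ℝ) := by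
    funext m
    rw [resonanceKernel, sub_zero, ← jb_neg (k - m), neg_sub]
  obtain ⟨hzero, hzero_le⟩ := hC 0
  obtain ⟨hk, hk_le⟩ := hC k
  obtain ⟨hρ, hρ_le⟩ := hD (ρ * k)
  rw [heq]
  refine ⟨(hzero.add hk).add hρ, ?_⟩
  rw [(hzero.add hk).tsum_add hρ, hzero.tsum_add hk]
  gcongr

variable {ρ ν s s₁ ε k m : ℝ}

theorem mul_jb_le_abs_of_resonant (hρ : 4 * ε ≤ |ρ|) (hk : 1 ≤ |k|)
    (hres : |m - ρ * k| ≤ ε * jb k) : ε * jb k ≤ |m| := by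
  have htri : |ρ| * |k| ≤ |m| + |m - ρ * k| := by
    rw [← abs_mul]
    simpa using abs_sub m (m - ρ * k)
  nlinarith [mul_le_mul_of_nonneg_right hρ (jb_pos k).le,
    mul_le_mul_of_nonneg_left (jb_le_two_mul_abs hk) (abs_nonneg ρ)]

theorem mul_jb_le_abs_sub_of_resonant (hρ : 4 * ε ≤ |1 - ρ|) (hk : 1 ≤ |k|)
    (hres : |m - ρ * k| ≤ ε * jb k) : ε * jb k ≤ |k - m| := by
  refine mul_jb_le_abs_of_resonant hρ hk ?_
  rwa [abs_sub_comm, show (1 - ρ) * k - (k - m) = m - ρ * k by ring]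

theorem weight_mul_inv_sq_le_of_nonresonant (hs : 0 ≤ s) (hs₁ : s₁ - s ≤ 1) (hε : 0 < ε)
    (hm : 1 ≤ |m|) (hres : ε * jb k ≤ |m - ρ * k|) :
    jb k ^ (2 * s₁) * ((m * (m - ρ * k)) ^ 2)⁻¹ ≤
      (ε ^ 2)⁻¹ * 2 ^ (2 * s) * (jb m ^ (-(2 * s)) + jb (k - m) ^ (-(2 * s))) *
        (jb m ^ (2 * s) * jb (k - m) ^ (2 * s)) := by
  have hJ := jb_pos k
  calc jb k ^ (2 * s₁) * ((m * (m - ρ * k)) ^ 2)⁻¹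
      ≤ jb k ^ (2 * s₁) * ((1 * (ε * jb k)) ^ 2)⁻¹ := by
        rw [← sq_abs (m * (m - ρ * k)), abs_mul]
        gcongr
    _ = (ε ^ 2)⁻¹ * jb k ^ (2 * s₁ - 2) := by
        rw [Real.rpow_sub hJ, Real.rpow_two, one_mul, mul_pow, mul_inv]
        ring
    _ ≤ (ε ^ 2)⁻¹ * jb k ^ (2 * s) := by
        gcongr
        · exact one_le_jb k
        · linarith
    _ ≤ (ε ^ 2)⁻¹ * (2 ^ (2 * s) * (jb m ^ (2 * s) + jb (k - m) ^ (2 * s))) := by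
        gcongr
        simpa using jb_add_rpow_le (p := 2 * s) (by linarith) m (k - m)
    _ = _ := by
        have := jb_rpow_pos m (2 * s)
        have := jb_rpow_pos (k - m) (2 * s)
        rw [Real.rpow_neg (jb_pos _).le, Real.rpow_neg (jb_pos _).le]
        field_simp
        ring

theorem weight_mul_inv_sq_le_of_resonant {D : ℝ} (hs : 0 ≤ s) (hs₁ : s₁ - s ≤ s - ν) (hε : 0 < ε)
    (hm : ε * jb k ≤ |m|) (hkm : ε * jb k ≤ |k - m|) (hD : 0 ≤ D)
    (hx : ((m - ρ * k) ^ 2)⁻¹ ≤ D * jb k ^ (2 + 2 * ν) * jb (m - ρ * k) ^ (-2 : ℝ)) :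
    jb k ^ (2 * s₁) * ((m * (m - ρ * k)) ^ 2)⁻¹ ≤
      (ε ^ 2)⁻¹ * D * (ε ^ (4 * s))⁻¹ * jb (m - ρ * k) ^ (-2 : ℝ) *
        (jb m ^ (2 * s) * jb (k - m) ^ (2 * s)) := by
  have hJ := jb_pos k
  have hx0 := jb_rpow_pos (m - ρ * k) (-2)
  have hJ4 : jb k ^ (4 * s) ≤ (ε ^ (4 * s))⁻¹ * (jb m ^ (2 * s) * jb (k - m) ^ (2 * s)) := by
    rw [le_inv_mul_iff₀ (by positivity), ← Real.mul_rpow hε.le hJ.le,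
      show 4 * s = 2 * s + 2 * s by ring, Real.rpow_add (by positivity)]
    gcongr
    · exact (jb_rpow_pos _ _).le
    · exact hm.trans (abs_le_jb _)
    · exact hkm.trans (abs_le_jb _)
  calc jb k ^ (2 * s₁) * ((m * (m - ρ * k)) ^ 2)⁻¹
      = jb k ^ (2 * s₁) * ((|m| ^ 2)⁻¹ * ((m - ρ * k) ^ 2)⁻¹) := by
        rw [mul_pow, mul_inv, sq_abs]
    _ ≤ jb k ^ (2 * s₁) * (((ε * jb k) ^ 2)⁻¹ *
          (D * jb k ^ (2 + 2 * ν) * jb (m - ρ * k) ^ (-2 : ℝ))) := by gcongr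
    _ = (ε ^ 2)⁻¹ * D * jb (m - ρ * k) ^ (-2 : ℝ) * jb k ^ (2 * s₁ + 2 * ν) := by
        rw [Real.rpow_add hJ, Real.rpow_add hJ, Real.rpow_two]
        field_simp
    _ ≤ (ε ^ 2)⁻¹ * D * jb (m - ρ * k) ^ (-2 : ℝ) * jb k ^ (4 * s) := by
        gcongr
        · exact one_le_jb k
        · linarith
    _ ≤ (ε ^ 2)⁻¹ * D * jb (m - ρ * k) ^ (-2 : ℝ) *
          ((ε ^ (4 * s))⁻¹ * (jb m ^ (2 * s) * jb (k - m) ^ (2 * s))) := by gcongr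
    _ = _ := by ring

theorem IsOfType.exists_weight_mul_inv_sq_le (hρ : IsOfType ρ ν) (hν : -1 ≤ ν) (hs : 0 ≤ s)
    (hs₁ : s₁ - s ≤ min 1 (s - ν)) :
    ∃ C > 0, ∀ k m : ℤ, k ≠ 0 → m ≠ 0 →
      jb k ^ (2 * s₁) * ((m * (m - ρ * k)) ^ 2)⁻¹ ≤
        C * resonanceKernel ρ s k m * (jb m ^ (2 * s) * jb (k - m) ^ (2 * s)) := by
  obtain ⟨D, hD, hsmall⟩ := hρ.exists_inv_sq_le hν
  obtain ⟨hs₁one, hs₁ν⟩ := le_min_iff.1 hs₁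
  obtain ⟨ε, hε, hε₀, hε₁⟩ : ∃ ε > 0, 4 * ε ≤ |ρ| ∧ 4 * ε ≤ |1 - ρ| := by
    have hρ₀ : 0 < |ρ| := abs_pos.2 hρ.irrational.ne_zero
    have hρ₁ : 0 < |1 - ρ| := abs_pos.2 (sub_ne_zero.2 hρ.irrational.ne_one.symm)
    refine ⟨min |ρ| |1 - ρ| / 4, by positivity, ?_, ?_⟩ <;>
      linarith [min_le_left |ρ| |1 - ρ|, min_le_right |ρ| |1 - ρ|]
  set C₁ := (ε ^ 2)⁻¹ * 2 ^ (2 * s)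
  set C₂ := (ε ^ 2)⁻¹ * D * (ε ^ (4 * s))⁻¹
  have hC₁ : 0 < C₁ := by positivity
  have hC₂ : 0 < C₂ := by positivity
  refine ⟨C₁ + C₂, by positivity, fun k m hk hm => ?_⟩
  have hk₁ : 1 ≤ |(k : ℝ)| := mod_cast Int.one_le_abs hk
  have hm₁ : 1 ≤ |(m : ℝ)| := mod_cast Int.one_le_abs hm
  have hweights := mul_pos (jb_rpow_pos m (2 * s)) (jb_rpow_pos (k - m) (2 * s))
  have hfar := add_pos (jb_rpow_pos m (-(2 * s))) (jb_rpow_pos (k - m) (-(2 * s)))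
  have hnear := jb_rpow_pos (m - ρ * k) (-2)
  unfold resonanceKernel
  rcases le_total (ε * jb k) |m - ρ * k| with hres | hres
  · refine (weight_mul_inv_sq_le_of_nonresonant hs hs₁one hε hm₁ hres).trans ?_
    gcongr ?_ * ?_ * _ <;> linarith
  · refine (weight_mul_inv_sq_le_of_resonant hs hs₁ν hε (mul_jb_le_abs_of_resonant hε₀ hk₁ hres)
      (mul_jb_le_abs_sub_of_resonant hε₁ hk₁ hres) hD.le (hsmall k m hk)).trans ?_
    gcongr ?_ * ?_ * _ <;> linarith

end ResonanceKernel

section Symbol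

variable {α : ℝ}

theorem c1_add_c2 (α : ℝ) : c1 α + c2 α = 1 := by
  rw [c1, c2]
  ring

theorem c2_lt_c1 (hα : α ∈ Set.Ioo (0 : ℝ) 4) : c2 α < c1 α := by
  have hdisc : 0 < √(12 / α - 3) :=
    Real.sqrt_pos.2 (sub_pos.2 ((lt_div_iff₀ hα.1).2 (by linarith [hα.2])))
  rw [c1, c2]
  linarith

theorem c1_mul_c2 (hα : α ∈ Set.Ioc (0 : ℝ) 4) : 3 * α * (c1 α * c2 α) = α - 1 := by
  have hα0 := hα.1
  have hdisc : 0 ≤ 12 / α - 3 :=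
    sub_nonneg.2 ((le_div_iff₀ hα0).2 (by linarith [hα.2]))
  rw [c1, c2, ← sq_sub_sq, div_pow, div_pow, Real.sq_sqrt hdisc]
  field_simp
  ring

theorem c1_mul_c2_ne_zero (hα : α ∈ Set.Ioc (0 : ℝ) 4) (hα1 : α ≠ 1) : c1 α * c2 α ≠ 0 :=
  right_ne_zero_of_mul ((c1_mul_c2 hα).trans_ne (sub_ne_zero.2 hα1))

theorem d1_ne_d2 (hα : α ∈ Set.Ioo (0 : ℝ) 4) : d1 α ≠ d2 α :=
  fun h => (c2_lt_c1 hα).ne' (inv_injective h)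

theorem one_sub_mul_d1_mul_d2 (hα : α ∈ Set.Ioc (0 : ℝ) 4) (hα1 : α ≠ 1) :
    (1 - α) * (d1 α * d2 α) = -(3 * α) := by
  have hc := c1_mul_c2_ne_zero hα hα1
  rw [d1, d2, ← mul_inv, ← div_eq_mul_inv, div_eq_iff hc]
  linarith [c1_mul_c2 hα]

theorem d1_add_d2 (hα : α ∈ Set.Ioc (0 : ℝ) 4) (hα1 : α ≠ 1) : d1 α + d2 α = d1 α * d2 α := by
  obtain ⟨hc1, hc2⟩ := mul_ne_zero_iff.1 (c1_mul_c2_ne_zero hα hα1)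
  rw [d1, d2, inv_add_inv hc1 hc2, c1_add_c2, one_div, mul_inv]

theorem resonance_factorization (hα : α ∈ Set.Ioc (0 : ℝ) 4) (hα1 : α ≠ 1) (k m : ℝ) :
    α * k ^ 3 - m ^ 3 - α * (k - m) ^ 3 = -(1 - α) * m * (m - d1 α * k) * (m - d2 α * k) := by
  linear_combination (m * k ^ 2 - m ^ 2 * k) * one_sub_mul_d1_mul_d2 hα hα1 -
    m ^ 2 * k * (1 - α) * d1_add_d2 hα hα1

theorem div_resonance_eq (hα : α ∈ Set.Ioo (0 : ℝ) 4) (hα1 : α ≠ 1) {k m : ℝ} (hm : m ≠ 0)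
    (h1 : m - d1 α * k ≠ 0) (h2 : m - d2 α * k ≠ 0) :
    k / (α * k ^ 3 - m ^ 3 - α * (k - m) ^ 3) =
      ((1 - α) * (d1 α - d2 α))⁻¹ * ((m * (m - d2 α * k))⁻¹ - (m * (m - d1 α * k))⁻¹) := by
  have hα1' : 1 - α ≠ 0 := sub_ne_zero.2 hα1.symm
  have hd : d1 α - d2 α ≠ 0 := sub_ne_zero.2 (d1_ne_d2 hα)
  rw [resonance_factorization (Set.Ioo_subset_Ioc_self hα) hα1]
  rw [inv_sub_inv (mul_ne_zero hm h2) (mul_ne_zero hm h1), ← div_eq_inv_mul, div_div,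
    div_eq_div_iff
      (mul_ne_zero (mul_ne_zero (mul_ne_zero (neg_ne_zero.2 hα1') hm) h1) h2)
      (mul_ne_zero (mul_ne_zero (mul_ne_zero hm h2) (mul_ne_zero hm h1)) (mul_ne_zero hα1' hd))]
  ring

theorem sq_div_resonance_le (hα : α ∈ Set.Ioo (0 : ℝ) 4) (hα1 : α ≠ 1) {k m : ℝ} (hm : m ≠ 0)
    (h1 : m - d1 α * k ≠ 0) (h2 : m - d2 α * k ≠ 0) :
    (k / (α * k ^ 3 - m ^ 3 - α * (k - m) ^ 3)) ^ 2 ≤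
      2 * (((1 - α) * (d1 α - d2 α)) ^ 2)⁻¹ *
        (((m * (m - d1 α * k)) ^ 2)⁻¹ + ((m * (m - d2 α * k)) ^ 2)⁻¹) := by
  rw [div_resonance_eq hα hα1 hm h1 h2, mul_pow, inv_pow, mul_comm 2, mul_assoc]
  gcongr
  have h := add_sq_le (a := (m * (m - d2 α * k))⁻¹) (b := -(m * (m - d1 α * k))⁻¹)
  rwa [← sub_eq_add_neg, neg_sq, inv_pow, inv_pow, add_comm ((_ ^ 2)⁻¹)] at h

theorem norm_B2term_sq (α : ℝ) (a b : ℤ → ℂ) (k : ℤ) {m : ℤ} (hm : m ≠ 0) :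
    ‖B2term α a b k m‖ ^ 2 =
      (k / (α * k ^ 3 - m ^ 3 - α * (k - m) ^ 3)) ^ 2 * (‖a m‖ ^ 2 * ‖b (k - m)‖ ^ 2) := by
  rw [B2term, if_neg hm, norm_div, norm_mul, norm_mul, Complex.norm_real, Complex.norm_intCast,
    Real.norm_eq_abs, div_pow, div_pow, sq_abs, mul_pow, mul_pow, sq_abs]
  ring

theorem exists_weight_mul_norm_B2term_sq_le {ν s s₁ : ℝ} (hα : α ∈ Set.Ioo (0 : ℝ) 4)
    (hα1 : α ≠ 1) (hν : -1 ≤ ν) (hd1 : IsOfType (d1 α) ν) (hd2 : IsOfType (d2 α) ν) (hs : 0 ≤ s)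
    (hs₁ : s₁ - s ≤ min 1 (s - ν)) :
    ∃ C > 0, ∀ (a b : ℤ → ℂ) (k m : ℤ), jb k ^ (2 * s₁) * ‖B2term α a b k m‖ ^ 2 ≤
      C * (resonanceKernel (d1 α) s k m + resonanceKernel (d2 α) s k m) *
        ((jb m ^ (2 * s) * ‖a m‖ ^ 2) * (jb (k - m) ^ (2 * s) * ‖b (k - m)‖ ^ 2)) := by
  obtain ⟨C₁, hC₁, h1⟩ := hd1.exists_weight_mul_inv_sq_le hν hs hs₁
  obtain ⟨C₂, hC₂, h2⟩ := hd2.exists_weight_mul_inv_sq_le hν hs hs₁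
  have hα1' : 1 - α ≠ 0 := sub_ne_zero.2 hα1.symm
  have hd : d1 α - d2 α ≠ 0 := sub_ne_zero.2 (d1_ne_d2 hα)
  set c := 2 * (((1 - α) * (d1 α - d2 α)) ^ 2)⁻¹
  have hc : 0 < c := mul_pos two_pos (inv_pos.2 (sq_pos_of_ne_zero (mul_ne_zero hα1' hd)))
  refine ⟨c * (C₁ + C₂), mul_pos hc (add_pos hC₁ hC₂), fun a b k m => ?_⟩
  have hK₁ := resonanceKernel_pos (d1 α) s k m
  have hK₂ := resonanceKernel_pos (d2 α) s k m
  have hJ := jb_rpow_pos k (2 * s₁)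
  have hJm := jb_rpow_pos m (2 * s)
  have hJkm := jb_rpow_pos (k - m) (2 * s)
  by_cases hkm : k = 0 ∨ m = 0
  · have hzero : B2term α a b k m = 0 := by rcases hkm with rfl | rfl <;> simp [B2term]
    rw [hzero, norm_zero, zero_pow two_ne_zero, mul_zero]
    positivity
  obtain ⟨hk, hm⟩ := not_or.1 hkm
  have hne {d : ℝ} (hd : Irrational d) : (m : ℝ) - d * k ≠ 0 :=
    sub_ne_zero.2 ((hd.mul_intCast hk).ne_int m).symm
  calc jb k ^ (2 * s₁) * ‖B2term α a b k m‖ ^ 2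
      ≤ jb k ^ (2 * s₁) * (c * (((m * (m - d1 α * k)) ^ 2)⁻¹ + ((m * (m - d2 α * k)) ^ 2)⁻¹) *
          (‖a m‖ ^ 2 * ‖b (k - m)‖ ^ 2)) := by
        rw [norm_B2term_sq α a b k hm]
        gcongr
        exact sq_div_resonance_le hα hα1 (mod_cast hm) (hne hd1.irrational) (hne hd2.irrational)
    _ = c * (jb k ^ (2 * s₁) * ((m * (m - d1 α * k)) ^ 2)⁻¹ +
          jb k ^ (2 * s₁) * ((m * (m - d2 α * k)) ^ 2)⁻¹) *
          (‖a m‖ ^ 2 * ‖b (k - m)‖ ^ 2) := by ring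
    _ ≤ c * ((C₁ + C₂) * resonanceKernel (d1 α) s k m * (jb m ^ (2 * s) * jb (k - m) ^ (2 * s)) +
          (C₁ + C₂) * resonanceKernel (d2 α) s k m * (jb m ^ (2 * s) * jb (k - m) ^ (2 * s))) *
          (‖a m‖ ^ 2 * ‖b (k - m)‖ ^ 2) := by
        gcongr c * (?_ + ?_) * _
        · exact (h1 k m hk hm).trans (by gcongr; linarith)
        · exact (h2 k m hk hm).trans (by gcongr; linarith)
    _ = _ := by ring

end Symbol

theorem B2_bilinear_estimate_general (α : ℝ) (hα : α ∈ Set.Ioo (0 : ℝ) 4) (hα1 : α ≠ 1) (ν : ℝ)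
    (hν : 0 ≤ ν) (hd1 : IsOfType (d1 α) ν) (hd2 : IsOfType (d2 α) ν)
    (s s₁ : ℝ) (hs : 1 / 2 < s) (hs₁ : s₁ - s ≤ min 1 (s - ν)) :
    ∃ C > 0, ∀ a b : ℤ → ℂ,
      Summable (fun m : ℤ => jb (m : ℝ) ^ (2 * s) * ‖a m‖ ^ 2) →
      Summable (fun n : ℤ => jb (n : ℝ) ^ (2 * s) * ‖b n‖ ^ 2) →
      (∀ k : ℤ, Summable (fun k₁ : ℤ => B2term α a b k k₁)) ∧
      Summable (fun k : ℤ => jb (k : ℝ) ^ (2 * s₁) * ‖∑' k₁ : ℤ, B2term α a b k k₁‖ ^ 2) ∧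
      (∑' k : ℤ, jb (k : ℝ) ^ (2 * s₁) * ‖∑' k₁ : ℤ, B2term α a b k k₁‖ ^ 2)
        ≤ C * (∑' m : ℤ, jb (m : ℝ) ^ (2 * s) * ‖a m‖ ^ 2)
            * (∑' n : ℤ, jb (n : ℝ) ^ (2 * s) * ‖b n‖ ^ 2) := by
  obtain ⟨C, hC, hpointwise⟩ := exists_weight_mul_norm_B2term_sq_le (s := s) hα hα1
    (by linarith) hd1 hd2 (by linarith) hs₁
  obtain ⟨D₁, hD₁, hkernel₁⟩ := exists_tsum_resonanceKernel_le (d1 α) hs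
  obtain ⟨D₂, hD₂, hkernel₂⟩ := exists_tsum_resonanceKernel_le (d2 α) hs
  refine ⟨C * (D₁ + D₂), by positivity, fun a b ha hb => ?_⟩
  refine summable_and_tsum_weighted_norm_sq_le
    (N := fun k m => C * (resonanceKernel (d1 α) s k m + resonanceKernel (d2 α) s k m))
    (fun k => jb_rpow_pos k _) (fun m => mul_nonneg (jb_rpow_pos m _).le (sq_nonneg _))
    (fun n => mul_nonneg (jb_rpow_pos n _).le (sq_nonneg _)) ha hb
    (fun k m => (mul_pos hC (add_pos (resonanceKernel_pos ..) (resonanceKernel_pos ..))).le)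
    (fun k => ((hkernel₁ k).1.add (hkernel₂ k).1).mul_left C) (fun k => ?_)
    (fun k m => mod_cast hpointwise a b k m)
  rw [tsum_mul_left, (hkernel₁ k).1.tsum_add (hkernel₂ k).1]
  gcongr
  exacts [(hkernel₁ k).2, (hkernel₂ k).2]

/-- The bilinear `H^{s₁} × H^s × H^s` estimate for `B₂`: if `α ∈ (0,1)`, `d₁, d₂` are of type
`ν ≥ 0`, `s > 1/2` and `s₁ − s < min{1, s − ν}`, then for all `a, b` with `a₀ = 0`,
`Σ_k ⟨k⟩^{2s₁} |Σ_{k₁ ≠ 0} k·a_{k₁}·b_{k−k₁}/(αk³ − k₁³ − α(k−k₁)³)|²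
  ≤ C (Σ_m ⟨m⟩^{2s}|a_m|²)(Σ_n ⟨n⟩^{2s}|b_n|²)`. -/
theorem B2_bilinear_estimate (α : ℝ) (hα : α ∈ Set.Ioo (0 : ℝ) 1) (ν : ℝ) (hν : 0 ≤ ν)
    (hd1 : IsOfType (d1 α) ν) (hd2 : IsOfType (d2 α) ν)
    (s s₁ : ℝ) (hs : 1/2 < s) (hs₁ : s₁ - s < min 1 (s - ν)) :
    ∃ C > 0, ∀ a b : ℤ → ℂ, a 0 = 0 →
      Summable (fun m : ℤ => jb (m : ℝ) ^ (2 * s) * ‖a m‖^2) →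
      Summable (fun n : ℤ => jb (n : ℝ) ^ (2 * s) * ‖b n‖^2) →
      (∀ k : ℤ, Summable (fun k₁ : ℤ => B2term α a b k k₁)) ∧
      Summable (fun k : ℤ => jb (k : ℝ) ^ (2 * s₁) * ‖∑' k₁ : ℤ, B2term α a b k k₁‖^2) ∧
      (∑' k : ℤ, jb (k : ℝ) ^ (2 * s₁) * ‖∑' k₁ : ℤ, B2term α a b k k₁‖^2)
        ≤ C * (∑' m : ℤ, jb (m : ℝ) ^ (2 * s) * ‖a m‖^2)
            * (∑' n : ℤ, jb (n : ℝ) ^ (2 * s) * ‖b n‖^2) := by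
  obtain ⟨C, hC, hbound⟩ := B2_bilinear_estimate_general α ⟨hα.1, by linarith [hα.2]⟩ hα.2.ne ν hν
    hd1 hd2 s s₁ hs hs₁.le
  exact ⟨C, hC, fun a b _ => hbound a b⟩
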